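/- (Rank-based characterization for (k+1)-step linear predictors, statement 1.) Consider the chain-structured system with nonlinearity concentrated in x_k (as defined in the context), where additionally 𝒳 is open and convex, 𝒰 is open, and the dynamics map from 𝒳 × 𝒰 onto 𝒳 is surjective. Suppose the system admits a (k+1)-step linear predictor. If the coefficient matrix M_k is the zero matrix or has full row rank, then the system admits a control-affine preserved (CAP) structure. -/

import Mathlib

open Matrix

noncomputable section

/-- Index type for a block-partitioned state. -/
abbrev Blk {K : ℕ} (dims : Fin K → ℕ) : Type := (i : Fin K) × Fin (dims i)

/-- The `i`-th block of a block-partitioned state. -/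
def blk {K : ℕ} {dims : Fin K → ℕ} (x : Blk dims → ℝ) (i : Fin K) : Fin (dims i) → ℝ :=
  fun j => x ⟨i, j⟩

/-- The `N`-step iterated dynamics `f_N`. -/
def iterDyn {ι : Type} {m : ℕ} (f : (ι → ℝ) → (Fin m → ℝ) → (ι → ℝ)) :
    (N : ℕ) → (ι → ℝ) → (Fin N → (Fin m → ℝ)) → (ι → ℝ)
  | 0, x, _ => x
  | N + 1, x, u => f (iterDyn f N x (fun i => u i.castSucc)) (u (Fin.last N))

/-- The system `x⁺ = f(x,u)` admits an `N`-step linear predictor on `X`, `U`. -/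
def HasNStepLinearPredictor {ι : Type} [Fintype ι] {m : ℕ}
    (f : (ι → ℝ) → (Fin m → ℝ) → (ι → ℝ))
    (X : Set (ι → ℝ)) (U : Set (Fin m → ℝ)) (N : ℕ) : Prop :=
  ∃ (Φ : (ι → ℝ) → (ι → ℝ)) (B : Matrix ι (Fin N × Fin m) ℝ),
    ∀ x ∈ X, ∀ u : Fin N → (Fin m → ℝ), (∀ i, u i ∈ U) →
      iterDyn f N x u = Φ x + B.mulVec (fun p => u p.1 p.2)

/-- The system admits a control-affine preserved (CAP) structure. -/
def HasCAP {ι : Type} [Fintype ι] [DecidableEq ι] {m : ℕ}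
    (f : (ι → ℝ) → (Fin m → ℝ) → (ι → ℝ))
    (X : Set (ι → ℝ)) (U : Set (Fin m → ℝ)) : Prop :=
  ∃ (n₁ n₂ : ℕ) (T : Matrix (Fin n₁ ⊕ Fin n₂) ι ℝ) (S : Matrix ι (Fin n₁ ⊕ Fin n₂) ℝ),
    T * S = 1 ∧ S * T = 1 ∧
    ∃ (g : (Fin n₂ → ℝ) → (Fin n₁ → ℝ)) (h : (Fin n₂ → ℝ) → (Fin n₂ → ℝ))
      (C : Matrix (Fin n₁) (Fin n₁) ℝ) (D : Matrix (Fin n₁) (Fin m) ℝ),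
      ∀ x ∈ X, ∀ u ∈ U,
        T.mulVec (f x u) =
          Sum.elim
            (g (fun i => T.mulVec x (Sum.inr i)) +
              C.mulVec (fun i => T.mulVec x (Sum.inl i)) + D.mulVec u)
            (h (fun i => T.mulVec x (Sum.inr i)))

/-- The chain-structured system with nonlinearity concentrated in the last block. -/
def IsChainSystem {k m : ℕ} (dims : Fin (k + 1) → ℕ)
    (f : (Blk dims → ℝ) → (Fin m → ℝ) → (Blk dims → ℝ))
    (X : Set (Blk dims → ℝ)) (U : Set (Fin m → ℝ))
    (M₀ : Matrix (Fin (dims 0)) (Fin m) ℝ)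
    (M : (i : Fin k) → Matrix (Fin (dims i.succ)) (Fin (dims i.castSucc)) ℝ)
    (C : (i : Fin (k + 1)) → Matrix (Fin (dims i)) (Blk dims) ℝ)
    (g : (i : Fin (k + 1)) → (Fin (dims (Fin.last k)) → ℝ) → Fin (dims i) → ℝ) : Prop :=
  (∀ i : Fin (k + 1), ∀ q : Blk dims,
      ¬((i : ℕ) ≤ (q.1 : ℕ) ∧ (q.1 : ℕ) < k) → ∀ j, C i j q = 0) ∧
  M₀.rank = dims 0 ∧
  (∀ i : Fin k, (i : ℕ) < k - 1 → (M i).rank = dims i.succ) ∧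
  (∀ x ∈ X, ∀ u ∈ U,
    blk (f x u) 0 = M₀.mulVec u + (C 0).mulVec x + g 0 (blk x (Fin.last k)) ∧
    ∀ i : Fin k,
      blk (f x u) i.succ =
        (M i).mulVec (blk x i.castSucc) + (C i.succ).mulVec x +
          g i.succ (blk x (Fin.last k)))

/-! Let `P` extract the last block, so that the chain reads `x⁺ = A x + E u + g (P x)` with `A`, `E`
linear. If `M_k = 0`, then `P x` evolves autonomously: it serves as `x̃₂`, and a complementary
projection onto `ker P` as `x̃₁`.

If every `M_i` has full row rank, the effect of an input travels down the chain by exactly one block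
per step: `P A^j E = 0` for `j < k - 1`, while `P A^(k-1) E` is onto. Perturbing the first input by
a small `w` therefore leaves the nonlinearity untouched until the last of the `k + 1` steps, where
the predictor forces `g (P y + P A^(k-1) E w) - g (P y)` to be linear in `w`, with the same linear
map for all states `y` reached at that time. As the dynamics are onto, these `y` exhaust `X`, so
`g ∘ P` is locally affine on `X` with constant linear part. On a connected set it is then affine,
and so are the dynamics. -/

theorem exists_linearEquiv_prod_snd_eq {K V W : Type*} [Field K] [AddCommGroup V] [Module K V]
    [FiniteDimensional K V] [AddCommGroup W] [Module K W] {P : V →ₗ[K] W}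
    (hP : Function.Surjective P) :
    ∃ (n₁ n₂ : ℕ) (e : V ≃ₗ[K] (Fin n₁ → K) × (Fin n₂ → K)) (b : W ≃ₗ[K] (Fin n₂ → K)),
      ∀ x, (e x).2 = b (P x) := by
  have : Module.Finite K W := Module.Finite.of_surjective P hP
  obtain ⟨R, hR⟩ := P.exists_rightInverse_of_surjective (LinearMap.range_eq_top.2 hP)
  obtain ⟨e, -, he⟩ := (LinearMap.exact_subtype_ker_map P).splitSurjectiveEquiv
    (Submodule.subtype_injective _) ⟨R, hR⟩
  let b := (Module.finBasis K W).equivFun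
  refine ⟨_, _, e.trans ((Module.finBasis K P.ker).equivFun.prodCongr b), b, fun x => ?_⟩
  exact congrArg b (LinearMap.congr_fun he x).symm

theorem surjective_mulVec_of_rank_eq_card {K a b : Type*} [Field K] [Fintype a] [Fintype b]
    {A : Matrix a b K} (h : A.rank = Fintype.card a) : Function.Surjective A.mulVec := by
  have hrange : LinearMap.range A.mulVecLin = ⊤ := by
    refine Submodule.eq_top_of_finrank_eq ?_
    rw [Module.finrank_fintype_fun_eq_card]
    exact h
  exact LinearMap.range_eq_top.1 hrange

section Topology

open Topology

theorem exists_eq_linear_add_const_of_eventually_sub_eq {R V Y : Type*} [Ring R] [AddCommGroup V]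
    [Module R V] [TopologicalSpace V] [AddCommGroup Y] [Module R Y] {X : Set V}
    (hX : IsPreconnected X) {φ : V → Y} {ℓ : V →ₗ[R] Y}
    (hφ : ∀ y ∈ X, ∀ᶠ z in 𝓝[X] y, φ z - φ y = ℓ (z - y)) :
    ∃ c, ∀ x ∈ X, φ x = ℓ x + c := by
  obtain rfl | ⟨y, hy⟩ := X.eq_empty_or_nonempty
  · exact ⟨0, fun x hx => hx.elim⟩
  have hlocal : ∀ y ∈ X, ∀ᶠ z in 𝓝[X] y, φ y - ℓ y = φ z - ℓ z := fun y hy => by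
    filter_upwards [hφ y hy] with z hz
    rwa [eq_comm, sub_eq_sub_iff_sub_eq_sub, ← map_sub]
  have hconst : ∀ x ∈ X, φ y - ℓ y = φ x - ℓ x := fun x hx =>
    hX.induction₂ (fun y z => φ y - ℓ y = φ z - ℓ z) hlocal (fun _ _ _ _ _ _ => Eq.trans)
      (fun _ _ _ _ => Eq.symm) hy hx
  exact ⟨φ y - ℓ y, fun x hx => by rw [hconst x hx, add_sub_cancel]⟩

end Topology

/-- A system in Lurie form: the nonlinearity `g` enters the dynamics additively and sees the state
only through the linear output `P x`. -/
def HasLurieForm {ι : Type} {m : ℕ} {W : Type*} [AddCommGroup W] [Module ℝ W]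
    (f : (ι → ℝ) → (Fin m → ℝ) → (ι → ℝ)) (X : Set (ι → ℝ)) (U : Set (Fin m → ℝ))
    (A : (ι → ℝ) →ₗ[ℝ] (ι → ℝ)) (E : (Fin m → ℝ) →ₗ[ℝ] (ι → ℝ))
    (P : (ι → ℝ) →ₗ[ℝ] W) (g : W → ι → ℝ) : Prop :=
  ∀ x ∈ X, ∀ u ∈ U, f x u = A x + E u + g (P x)

section CAP

variable {ι : Type} [Fintype ι] [DecidableEq ι] {m : ℕ}
  {f : (ι → ℝ) → (Fin m → ℝ) → (ι → ℝ)} {X : Set (ι → ℝ)} {U : Set (Fin m → ℝ)}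
  {A : (ι → ℝ) →ₗ[ℝ] (ι → ℝ)} {E : (Fin m → ℝ) →ₗ[ℝ] (ι → ℝ)}

theorem hasCAP_of_linearEquiv {n₁ n₂ : ℕ} (e : (ι → ℝ) ≃ₗ[ℝ] (Fin n₁ → ℝ) × (Fin n₂ → ℝ))
    (g : (Fin n₂ → ℝ) → Fin n₁ → ℝ) (h : (Fin n₂ → ℝ) → Fin n₂ → ℝ)
    (C : (Fin n₁ → ℝ) →ₗ[ℝ] (Fin n₁ → ℝ)) (D : (Fin m → ℝ) →ₗ[ℝ] (Fin n₁ → ℝ))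
    (hf : ∀ x ∈ X, ∀ u ∈ U, e (f x u) = (g (e x).2 + C (e x).1 + D u, h (e x).2)) :
    HasCAP f X U := by
  let e' : (ι → ℝ) ≃ₗ[ℝ] (Fin n₁ ⊕ Fin n₂ → ℝ) :=
    e.trans (LinearEquiv.sumArrowLequivProdArrow (Fin n₁) (Fin n₂) ℝ ℝ).symm
  have he' (x : ι → ℝ) : LinearMap.toMatrix' (e' : (ι → ℝ) →ₗ[ℝ] _) *ᵥ x =
      Sum.elim (e x).1 (e x).2 := LinearMap.toMatrix'_mulVec _ x
  refine ⟨n₁, n₂, LinearMap.toMatrix' (e' : (ι → ℝ) →ₗ[ℝ] _),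
    LinearMap.toMatrix' (e'.symm : _ →ₗ[ℝ] (ι → ℝ)), ?_, ?_, g, h,
    LinearMap.toMatrix' C, LinearMap.toMatrix' D, fun x hx u hu => ?_⟩
  · rw [← LinearMap.toMatrix'_comp, LinearEquiv.comp_symm, LinearMap.toMatrix'_id]
  · rw [← LinearMap.toMatrix'_comp, LinearEquiv.symm_comp, LinearMap.toMatrix'_id]
  · simp only [he', hf x hx u hu, Sum.elim_inl, Sum.elim_inr, LinearMap.toMatrix'_mulVec]

theorem HasLurieForm.hasCAP_of_autonomous_output {W : Type*} [AddCommGroup W] [Module ℝ W]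
    {P : (ι → ℝ) →ₗ[ℝ] W} {g : W → ι → ℝ} (hlurie : HasLurieForm f X U A E P g)
    (hP : Function.Surjective P) (h : W → W) (hh : ∀ x ∈ X, ∀ u ∈ U, P (f x u) = h (P x)) :
    HasCAP f X U := by
  obtain ⟨n₁, n₂, e, b, he⟩ := exists_linearEquiv_prod_snd_eq hP
  let Q : (ι → ℝ) →ₗ[ℝ] (Fin n₁ → ℝ) := LinearMap.fst ℝ _ _ ∘ₗ e.toLinearMap
  refine hasCAP_of_linearEquiv e (fun y => Q (A (e.symm (0, y)) + g (b.symm y)))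
    (fun y => b (h (b.symm y))) (Q ∘ₗ A ∘ₗ e.symm.toLinearMap ∘ₗ LinearMap.inl ℝ _ _) (Q ∘ₗ E)
    fun x hx u hu => Prod.ext ?_ ?_
  · have hAx : A x = A (e.symm ((e x).1, 0)) + A (e.symm (0, (e x).2)) := by
      rw [← map_add, ← map_add]
      simp
    have hPx : b.symm (e x).2 = P x := by simp [he]
    change Q (f x u) = Q (A (e.symm (0, (e x).2)) + g (b.symm (e x).2)) +
      Q (A (e.symm ((e x).1, 0))) + Q (E u)
    simp only [hlurie x hx u hu, hPx, hAx, map_add]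
    abel
  · simp [he, hh x hx u hu]

theorem hasCAP_of_affine {c : ι → ℝ}
    (hf : ∀ x ∈ X, ∀ u ∈ U, f x u = A x + E u + c) : HasCAP f X U :=
  HasLurieForm.hasCAP_of_autonomous_output (W := Fin 0 → ℝ) (P := 0) (g := fun _ => c) hf
    (Function.surjective_to_subsingleton _) id fun _ _ _ _ => rfl

end CAP

section Trajectory

variable {ι : Type} {m : ℕ} {f : (ι → ℝ) → (Fin m → ℝ) → (ι → ℝ)}
  {X : Set (ι → ℝ)} {U : Set (Fin m → ℝ)}

theorem iterDyn_succ_cons (N : ℕ) (x : ι → ℝ) (v : Fin m → ℝ) (u : Fin N → Fin m → ℝ) :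
    iterDyn f (N + 1) x (Fin.cons v u) = iterDyn f N (f x v) u := by
  induction N with
  | zero => rfl
  | succ N ih =>
    have hinit : (fun i : Fin (N + 1) => (Fin.cons v u : Fin (N + 2) → Fin m → ℝ) i.castSucc) =
        Fin.cons v fun i => u i.castSucc := 
      funext (Fin.cases rfl fun _ => rfl)
    rw [iterDyn, hinit, ih]
    rfl

theorem iterDyn_succ_snoc (N : ℕ) (x : ι → ℝ) (u : Fin N → Fin m → ℝ) (v : Fin m → ℝ) :
    iterDyn f (N + 1) x (Fin.snoc u v) = f (iterDyn f N x u) v := by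
  simp [iterDyn]

theorem iterDyn_mem (hf : ∀ x ∈ X, ∀ u ∈ U, f x u ∈ X) {N : ℕ} {x : ι → ℝ} (hx : x ∈ X)
    {u : Fin N → Fin m → ℝ} (hu : ∀ i, u i ∈ U) : iterDyn f N x u ∈ X := by
  induction N with
  | zero => exact hx
  | succ N ih => exact hf _ (ih fun i => hu i.castSucc) _ (hu _)

theorem exists_iterDyn_eq (hsurj : ∀ y ∈ X, ∃ x ∈ X, ∃ u ∈ U, f x u = y) (N : ℕ) {y : ι → ℝ}
    (hy : y ∈ X) : ∃ x ∈ X, ∃ u : Fin N → Fin m → ℝ, (∀ i, u i ∈ U) ∧ iterDyn f N x u = y := by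
  induction N with
  | zero => exact ⟨y, hy, finZeroElim, finZeroElim, rfl⟩
  | succ N ih =>
    obtain ⟨z, hz, u, hu, rfl⟩ := ih
    obtain ⟨x, hx, v, hv, rfl⟩ := hsurj z hz
    exact ⟨x, hx, Fin.cons v u, Fin.cases hv hu, iterDyn_succ_cons N x v u⟩

theorem HasNStepLinearPredictor.exists_linear_first_input_response [Fintype ι] {N : ℕ}
    (hpred : HasNStepLinearPredictor f X U (N + 1)) :
    ∃ B₀ : (Fin m → ℝ) →ₗ[ℝ] (ι → ℝ), ∀ x ∈ X, ∀ v ∈ U, ∀ v' ∈ U, ∀ u : Fin N → Fin m → ℝ,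
      (∀ i, u i ∈ U) → iterDyn f N (f x v') u - iterDyn f N (f x v) u = B₀ (v' - v) := by
  obtain ⟨Φ, B, hB⟩ := hpred
  refine ⟨Matrix.mulVecLin (B.submatrix id (Prod.mk 0)), fun x hx v hv v' hv' u hu => ?_⟩
  rw [← iterDyn_succ_cons, ← iterDyn_succ_cons, hB x hx _ (Fin.cases hv' hu),
    hB x hx _ (Fin.cases hv hu), add_sub_add_left_eq_sub, ← Matrix.mulVec_sub]
  ext i
  simp [Matrix.mulVec, dotProduct, Fintype.sum_prod_type, Fin.sum_univ_succ]

end Trajectory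

namespace HasLurieForm

open Filter Topology

variable {ι : Type} {m : ℕ} {W : Type*} [AddCommGroup W] [Module ℝ W]
  {f : (ι → ℝ) → (Fin m → ℝ) → (ι → ℝ)} {X : Set (ι → ℝ)} {U : Set (Fin m → ℝ)}
  {A : (ι → ℝ) →ₗ[ℝ] (ι → ℝ)} {E : (Fin m → ℝ) →ₗ[ℝ] (ι → ℝ)}
  {P : (ι → ℝ) →ₗ[ℝ] W} {g : W → ι → ℝ}

theorem iterDyn_sub_iterDyn (hlurie : HasLurieForm f X U A E P g)
    (hf : ∀ x ∈ X, ∀ u ∈ U, f x u ∈ X) {N : ℕ} {x x' : ι → ℝ} (hx : x ∈ X) (hx' : x' ∈ X)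
    (hP : ∀ j < N, P ((A ^ j) (x' - x)) = 0) {u : Fin N → Fin m → ℝ} (hu : ∀ i, u i ∈ U) :
    iterDyn f N x' u - iterDyn f N x u = (A ^ N) (x' - x) := by
  induction N with
  | zero => rfl
  | succ N ih =>
    have hu_init (i : Fin N) : u i.castSucc ∈ U := hu _
    have ih := ih (fun j hj => hP j (by omega)) hu_init
    have hPeq := hP N (by omega)
    rw [← ih, map_sub, sub_eq_zero] at hPeq
    rw [pow_succ', Module.End.mul_apply, ← ih, iterDyn, iterDyn,
      hlurie _ (iterDyn_mem hf hx' hu_init) _ (hu _), hlurie _ (iterDyn_mem hf hx hu_init) _ (hu _),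
      hPeq, map_sub]
    abel

variable [Fintype ι]

theorem exists_linear_nonlinearity_increment (hlurie : HasLurieForm f X U A E P g)
    (hUopen : IsOpen U) (hf : ∀ x ∈ X, ∀ u ∈ U, f x u ∈ X)
    (hsurj : ∀ y ∈ X, ∃ x ∈ X, ∃ u ∈ U, f x u = y) {N : ℕ}
    (hzero : ∀ j < N, ∀ v, P ((A ^ j) (E v)) = 0)
    (hpred : HasNStepLinearPredictor f X U (N + 2)) :
    ∃ L : (Fin m → ℝ) →ₗ[ℝ] (ι → ℝ), ∀ y ∈ X, ∀ᶠ w in 𝓝 0,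
      g (P y + P ((A ^ N) (E w))) - g (P y) = L w := by
  obtain ⟨B₀, hB₀⟩ := hpred.exists_linear_first_input_response
  refine ⟨B₀ - (A ^ (N + 1)) ∘ₗ E, fun y hy => ?_⟩
  obtain ⟨z, hz, u, hu, rfl⟩ := exists_iterDyn_eq hsurj N hy
  obtain ⟨x, hx, v, hv, rfl⟩ := hsurj z hz
  have hcont : Tendsto (fun w => v + w) (𝓝 0) (𝓝 v) := by
    simpa using (continuous_const_add v).tendsto 0
  filter_upwards [hcont (hUopen.mem_nhds hv)] with w hw
  have hfirst : f x (v + w) - f x v = E w := by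
    rw [hlurie x hx _ hw, hlurie x hx v hv, map_add]
    abel
  have hz' := hf x hx _ hw
  set y := iterDyn f N (f x v) u
  set y' := iterDyn f N (f x (v + w)) u with hy'_def
  have hshift : y' - y = (A ^ N) (E w) := by
    rw [hy'_def, hlurie.iterDyn_sub_iterDyn hf hz hz' (by simpa [hfirst] using (hzero · · w)) hu,
      hfirst]
  have hPy' : P y' = P y + P ((A ^ N) (E w)) := by rw [← hshift, map_sub, add_sub_cancel]
  have hpredicted : f y' v - f y v = B₀ w := by
    have husnoc : ∀ i, (Fin.snoc u v : Fin (N + 1) → Fin m → ℝ) i ∈ U :=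
      Fin.lastCases (by simpa using hv) (by simpa using hu)
    simpa only [iterDyn_succ_snoc, add_sub_cancel_left] using
      hB₀ x hx v hv _ hw (Fin.snoc u v) husnoc
  rw [hlurie y' (iterDyn_mem hf hz' hu) v hv, hlurie y hy v hv, hPy'] at hpredicted
  have hA : (A ^ (N + 1)) (E w) = A y' - A y := by
    rw [pow_succ', Module.End.mul_apply, ← hshift, map_sub]
  rw [LinearMap.sub_apply, ← hpredicted, LinearMap.comp_apply, hA]
  abel

theorem exists_nonlinearity_eq_affine (hlurie : HasLurieForm f X U A E P g)
    (hX : IsPreconnected X) (hUopen : IsOpen U) (hf : ∀ x ∈ X, ∀ u ∈ U, f x u ∈ X)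
    (hsurj : ∀ y ∈ X, ∃ x ∈ X, ∃ u ∈ U, f x u = y) {N : ℕ}
    (hzero : ∀ j < N, ∀ v, P ((A ^ j) (E v)) = 0)
    (honto : Function.Surjective (P ∘ₗ (A ^ N) ∘ₗ E))
    (hpred : HasNStepLinearPredictor f X U (N + 2)) :
    ∃ (G : W →ₗ[ℝ] (ι → ℝ)) (c : ι → ℝ), ∀ x ∈ X, g (P x) = G (P x) + c := by
  obtain ⟨L, hL⟩ := hlurie.exists_linear_nonlinearity_increment hUopen hf hsurj hzero hpred
  obtain ⟨Q, hQ⟩ := (P ∘ₗ (A ^ N) ∘ₗ E).exists_rightInverse_of_surjective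
    (LinearMap.range_eq_top.2 honto)
  have hincrement : ∀ y ∈ X, ∀ᶠ z in 𝓝[X] y,
      g (P z) - g (P y) = (L ∘ₗ Q ∘ₗ P) (z - y) := fun y hy => by
    have htendsto : Tendsto (fun z => Q (P (z - y))) (𝓝 y) (𝓝 0) := by
      have hcont : Continuous fun z => Q (P (z - y)) :=
        (Q ∘ₗ P).continuous_of_finiteDimensional.comp (continuous_id.sub continuous_const)
      simpa using hcont.tendsto y
    filter_upwards [nhdsWithin_le_nhds (htendsto.eventually (hL y hy))] with z hz
    have hPQ : P ((A ^ N) (E (Q (P (z - y))))) = P (z - y) := LinearMap.congr_fun hQ _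
    rwa [hPQ, ← map_add, add_sub_cancel] at hz
  obtain ⟨c, hc⟩ := exists_eq_linear_add_const_of_eventually_sub_eq hX hincrement
  exact ⟨L ∘ₗ Q, c, hc⟩

theorem hasCAP_of_surjective_markov_parameter [DecidableEq ι] (hlurie : HasLurieForm f X U A E P g)
    (hX : IsPreconnected X) (hUopen : IsOpen U) (hf : ∀ x ∈ X, ∀ u ∈ U, f x u ∈ X)
    (hsurj : ∀ y ∈ X, ∃ x ∈ X, ∃ u ∈ U, f x u = y) {N : ℕ}
    (hzero : ∀ j < N, ∀ v, P ((A ^ j) (E v)) = 0)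
    (honto : Function.Surjective (P ∘ₗ (A ^ N) ∘ₗ E))
    (hpred : HasNStepLinearPredictor f X U (N + 2)) : HasCAP f X U := by
  obtain ⟨G, c, hG⟩ :=
    hlurie.exists_nonlinearity_eq_affine hX hUopen hf hsurj hzero honto hpred
  refine hasCAP_of_affine (A := A + G ∘ₗ P) (E := E) (c := c) fun x hx u hu => ?_
  rw [hlurie x hx u hu, hG x hx, LinearMap.add_apply, LinearMap.comp_apply]
  abel

end HasLurieForm

section Chain

variable {k m : ℕ} {dims : Fin (k + 1) → ℕ}

/-- The state space of a chain as a product of blocks: `x ↦ (i ↦ blk x i)`, linearly. -/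
def blkEquiv (dims : Fin (k + 1) → ℕ) :
    (Blk dims → ℝ) ≃ₗ[ℝ] ((i : Fin (k + 1)) → Fin (dims i) → ℝ) :=
  LinearEquiv.piCurry ℝ fun _ _ => ℝ

/-- The block extraction `x ↦ blk x i` as a linear map. -/
def blkLin (dims : Fin (k + 1) → ℕ) (i : Fin (k + 1)) :
    (Blk dims → ℝ) →ₗ[ℝ] (Fin (dims i) → ℝ) :=
  LinearMap.proj i ∘ₗ (blkEquiv dims).toLinearMap

/-- The state-linear part of the dynamics of a chain-structured system. -/
def chainDrift (M : (i : Fin k) → Matrix (Fin (dims i.succ)) (Fin (dims i.castSucc)) ℝ)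
    (C : (i : Fin (k + 1)) → Matrix (Fin (dims i)) (Blk dims) ℝ) :
    (Blk dims → ℝ) →ₗ[ℝ] (Blk dims → ℝ) :=
  (blkEquiv dims).symm.toLinearMap ∘ₗ LinearMap.pi (Fin.cases (C 0).mulVecLin fun i =>
    (M i).mulVecLin ∘ₗ blkLin dims i.castSucc + (C i.succ).mulVecLin)

/-- The input map of a chain-structured system, which feeds `M₀ u` into the first block. -/
def chainInput (M₀ : Matrix (Fin (dims 0)) (Fin m) ℝ) : (Fin m → ℝ) →ₗ[ℝ] (Blk dims → ℝ) :=
  (blkEquiv dims).symm.toLinearMap ∘ₗ LinearMap.single ℝ _ 0 ∘ₗ M₀.mulVecLin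

/-- The support condition on the coupling matrices of a chain: row block `i` of `C` sees only the
blocks `i, …, k - 1`, hence never the last block `k`. -/
def IsChainCoupling (C : (i : Fin (k + 1)) → Matrix (Fin (dims i)) (Blk dims) ℝ) : Prop :=
  ∀ i : Fin (k + 1), ∀ q : Blk dims,
    ¬((i : ℕ) ≤ (q.1 : ℕ) ∧ (q.1 : ℕ) < k) → ∀ j, C i j q = 0

variable {f : (Blk dims → ℝ) → (Fin m → ℝ) → (Blk dims → ℝ)}
  {X : Set (Blk dims → ℝ)} {U : Set (Fin m → ℝ)}
  {M₀ : Matrix (Fin (dims 0)) (Fin m) ℝ}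
  {M : (i : Fin k) → Matrix (Fin (dims i.succ)) (Fin (dims i.castSucc)) ℝ}
  {C : (i : Fin (k + 1)) → Matrix (Fin (dims i)) (Blk dims) ℝ}
  {g : (i : Fin (k + 1)) → (Fin (dims (Fin.last k)) → ℝ) → Fin (dims i) → ℝ}

theorem blkLin_surjective (i : Fin (k + 1)) : Function.Surjective (blkLin dims i) :=
  (Function.surjective_eval i).comp (blkEquiv dims).surjective

theorem blk_chainDrift_zero (x : Blk dims → ℝ) : blk (chainDrift M C x) 0 = C 0 *ᵥ x := rfl

theorem blk_chainDrift_succ (x : Blk dims → ℝ) (i : Fin k) :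
    blk (chainDrift M C x) i.succ = M i *ᵥ blk x i.castSucc + C i.succ *ᵥ x := rfl

theorem blk_chainInput_zero (u : Fin m → ℝ) :
    blk (chainInput (dims := dims) M₀ u) 0 = M₀ *ᵥ u :=
  Pi.single_eq_same (M := fun i => Fin (dims i) → ℝ) 0 (M₀ *ᵥ u)

theorem blk_chainInput_succ (u : Fin m → ℝ) (i : Fin k) :
    blk (chainInput (dims := dims) M₀ u) i.succ = 0 :=
  Pi.single_eq_of_ne (M := fun i => Fin (dims i) → ℝ) (Fin.succ_ne_zero i) (M₀ *ᵥ u)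

theorem IsChainSystem.hasLurieForm (h : IsChainSystem dims f X U M₀ M C g) :
    HasLurieForm f X U (chainDrift M C) (chainInput M₀) (blkLin dims (Fin.last k))
      fun y p => g p.1 y p.2 := by
  intro x hx u hu
  obtain ⟨hblk_zero, hblk_succ⟩ := h.2.2.2 x hx u hu
  ext ⟨i, j⟩
  change blk (f x u) i j = blk (chainDrift M C x) i j + blk (chainInput M₀ u) i j +
    g i (blk x (Fin.last k)) j
  cases i using Fin.cases with
  | zero =>
    rw [hblk_zero, blk_chainDrift_zero, blk_chainInput_zero, Pi.add_apply, Pi.add_apply,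
      add_comm ((M₀ *ᵥ u) j)]
  | succ i => simp [hblk_succ, blk_chainDrift_succ, blk_chainInput_succ]

theorem IsChainCoupling.mulVec_eq_zero (hC : IsChainCoupling C) {i : Fin (k + 1)}
    {x : Blk dims → ℝ} (hx : ∀ q, i ≤ q → q < Fin.last k → blk x q = 0) : C i *ᵥ x = 0 := by
  ext j
  refine Finset.sum_eq_zero fun q _ => ?_
  by_cases hq : i ≤ q.1 ∧ q.1 < Fin.last k
  · exact mul_eq_zero_of_right _ (congrFun (hx q.1 hq.1 hq.2) q.2)
  · exact mul_eq_zero_of_left (hC i q hq j) _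

theorem IsChainCoupling.blk_chainDrift_succ_eq_mulVec (hC : IsChainCoupling C) {i : Fin k}
    {x : Blk dims → ℝ} (hx : ∀ q, i.castSucc < q → blk x q = 0) :
    blk (chainDrift M C x) i.succ = M i *ᵥ blk x i.castSucc := by
  rw [blk_chainDrift_succ,
    hC.mulVec_eq_zero fun q hq _ => hx q (i.castSucc_lt_succ.trans_le hq), add_zero]

theorem IsChainCoupling.blk_chainDrift_pow_chainInput_eq_zero (hC : IsChainCoupling C) {n : ℕ}
    {i : Fin (k + 1)} (hi : n < i) (v : Fin m → ℝ) :
    blk ((chainDrift M C ^ n) (chainInput M₀ v)) i = 0 := by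
  induction n generalizing i with
  | zero =>
    obtain ⟨i, rfl⟩ := Fin.exists_succ_eq.2 (Fin.pos_iff_ne_zero.1 hi)
    exact blk_chainInput_succ v i
  | succ n ih =>
    obtain ⟨i, rfl⟩ := Fin.exists_succ_eq.2 (Fin.pos_iff_ne_zero.1 (n.succ_pos.trans hi))
    have hni : n < (i.castSucc : ℕ) := Nat.succ_lt_succ_iff.1 hi
    rw [pow_succ', Module.End.mul_apply,
      hC.blk_chainDrift_succ_eq_mulVec fun q hq => ih (hni.trans hq), ih hni, Matrix.mulVec_zero]

theorem IsChainCoupling.surjective_blk_chainDrift_pow_chainInput (hC : IsChainCoupling C)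
    (hM₀ : Function.Surjective M₀.mulVec) (hM : ∀ i, Function.Surjective (M i).mulVec)
    (i : Fin (k + 1)) :
    Function.Surjective fun v => blk ((chainDrift M C ^ (i : ℕ)) (chainInput M₀ v)) i := by
  induction i using Fin.induction with
  | zero => simpa only [Fin.val_zero, pow_zero, Module.End.one_apply, blk_chainInput_zero] using hM₀
  | succ i ih =>
    have hstep (v : Fin m → ℝ) : blk ((chainDrift M C ^ (i.succ : ℕ)) (chainInput M₀ v)) i.succ =
        M i *ᵥ blk ((chainDrift M C ^ (i.castSucc : ℕ)) (chainInput M₀ v)) i.castSucc := by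
      rw [Fin.val_succ, pow_succ', Module.End.mul_apply]
      exact hC.blk_chainDrift_succ_eq_mulVec fun q hq =>
        hC.blk_chainDrift_pow_chainInput_eq_zero hq v
    simp only [hstep]
    exact (hM i).comp ih

end Chain

namespace IsChainSystem

variable {k m : ℕ} {dims : Fin (k + 2) → ℕ}
  {f : (Blk dims → ℝ) → (Fin m → ℝ) → (Blk dims → ℝ)}
  {X : Set (Blk dims → ℝ)} {U : Set (Fin m → ℝ)}
  {M₀ : Matrix (Fin (dims 0)) (Fin m) ℝ}
  {M : (i : Fin (k + 1)) → Matrix (Fin (dims i.succ)) (Fin (dims i.castSucc)) ℝ}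
  {C : (i : Fin (k + 2)) → Matrix (Fin (dims i)) (Blk dims) ℝ}
  {g : (i : Fin (k + 2)) → (Fin (dims (Fin.last (k + 1))) → ℝ) → Fin (dims i) → ℝ}

theorem hasCAP_of_last_eq_zero (h : IsChainSystem dims f X U M₀ M C g)
    (hM : M (Fin.last k) = 0) : HasCAP f X U := by
  refine h.hasLurieForm.hasCAP_of_autonomous_output (blkLin_surjective _)
    (g (Fin.last (k + 1))) fun x hx u hu => ?_
  have hC : C (Fin.last k).succ *ᵥ x = 0 := IsChainCoupling.mulVec_eq_zero h.1
    fun q hq hq' => absurd hq hq'.not_ge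
  refine ((h.2.2.2 x hx u hu).2 (Fin.last k)).trans ?_
  rw [hM, hC, Matrix.zero_mulVec, add_zero, zero_add]
  rfl

theorem surjective_mulVec_of_rank_last (h : IsChainSystem dims f X U M₀ M C g)
    (hM : (M (Fin.last k)).rank = dims (Fin.last k).succ) (i : Fin (k + 1)) :
    Function.Surjective (M i).mulVec := by
  apply surjective_mulVec_of_rank_eq_card
  rw [Fintype.card_fin]
  cases i using Fin.lastCases with
  | last => exact hM
  | cast i => exact h.2.2.1 _ i.isLt

theorem hasCAP_of_rank_last (h : IsChainSystem dims f X U M₀ M C g)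
    (hX : IsPreconnected X) (hUopen : IsOpen U) (hf : ∀ x ∈ X, ∀ u ∈ U, f x u ∈ X)
    (hsurj : ∀ y ∈ X, ∃ x ∈ X, ∃ u ∈ U, f x u = y)
    (hpred : HasNStepLinearPredictor f X U (k + 3))
    (hM : (M (Fin.last k)).rank = dims (Fin.last k).succ) : HasCAP f X U := by
  have hC : IsChainCoupling C := h.1
  have hM₀ : Function.Surjective M₀.mulVec :=
    surjective_mulVec_of_rank_eq_card (by rw [h.2.1, Fintype.card_fin])
  exact h.hasLurieForm.hasCAP_of_surjective_markov_parameter hX hUopen hf hsurj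
    (fun _ hj => hC.blk_chainDrift_pow_chainInput_eq_zero hj)
    (hC.surjective_blk_chainDrift_pow_chainInput hM₀ (h.surjective_mulVec_of_rank_last hM) _) hpred

end IsChainSystem

theorem chain_Mk_zero_or_full_row_rank_implies_CAP_general
    {k m : ℕ} (dims : Fin (k + 2) → ℕ)
    (f : (Blk dims → ℝ) → (Fin m → ℝ) → (Blk dims → ℝ))
    (X : Set (Blk dims → ℝ)) (U : Set (Fin m → ℝ))
    (hX : IsPreconnected X) (hUopen : IsOpen U)
    (hf : ∀ x ∈ X, ∀ u ∈ U, f x u ∈ X)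
    (hsurj : ∀ y ∈ X, ∃ x ∈ X, ∃ u ∈ U, f x u = y)
    (M₀ : Matrix (Fin (dims 0)) (Fin m) ℝ)
    (M : (i : Fin (k + 1)) → Matrix (Fin (dims i.succ)) (Fin (dims i.castSucc)) ℝ)
    (C : (i : Fin (k + 2)) → Matrix (Fin (dims i)) (Blk dims) ℝ)
    (g : (i : Fin (k + 2)) → (Fin (dims (Fin.last (k + 1))) → ℝ) → Fin (dims i) → ℝ)
    (hchain : IsChainSystem dims f X U M₀ M C g)
    (hpred : HasNStepLinearPredictor f X U (k + 3))
    (hMk : M (Fin.last k) = 0 ∨ (M (Fin.last k)).rank = dims (Fin.last k).succ) :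
    HasCAP f X U :=
  hMk.elim hchain.hasCAP_of_last_eq_zero
    (hchain.hasCAP_of_rank_last hX hUopen hf hsurj hpred)

/-- **Rank-based characterization for `(k+1)`-step linear predictors, statement 1.**
For a chain-structured system with `k+2` Lean-blocks (the paper's `k` equals `k+2`, so the
paper's `(k+1)`-step predictor is a `(k+3)`-step predictor here) on an open convex state set
with open input set and surjective dynamics: if the system admits a `(k+1)`-step linear
predictor (paper count) and the last coefficient matrix `M_k` is zero or has full row rank,
then the system admits a CAP structure. -/
theorem chain_Mk_zero_or_full_row_rank_implies_CAP
    {k m : ℕ} (dims : Fin (k + 2) → ℕ)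
    (f : (Blk dims → ℝ) → (Fin m → ℝ) → (Blk dims → ℝ))
    (X : Set (Blk dims → ℝ)) (U : Set (Fin m → ℝ))
    (hXopen : IsOpen X) (hXconv : Convex ℝ X) (hUopen : IsOpen U)
    (hf : ∀ x ∈ X, ∀ u ∈ U, f x u ∈ X)
    (hsurj : ∀ y ∈ X, ∃ x ∈ X, ∃ u ∈ U, f x u = y)
    (M₀ : Matrix (Fin (dims 0)) (Fin m) ℝ)
    (M : (i : Fin (k + 1)) → Matrix (Fin (dims i.succ)) (Fin (dims i.castSucc)) ℝ)
    (C : (i : Fin (k + 2)) → Matrix (Fin (dims i)) (Blk dims) ℝ)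
    (g : (i : Fin (k + 2)) → (Fin (dims (Fin.last (k + 1))) → ℝ) → Fin (dims i) → ℝ)
    (hchain : IsChainSystem dims f X U M₀ M C g)
    (hpred : HasNStepLinearPredictor f X U (k + 3))
    (hMk : M (Fin.last k) = 0 ∨ (M (Fin.last k)).rank = dims (Fin.last k).succ) :
    HasCAP f X U :=
  chain_Mk_zero_or_full_row_rank_implies_CAP_general dims f X U hXconv.isPreconnected hUopen hf
    hsurj M₀ M C g hchain hpred hMk
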